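/- Let V ⊆ ℝ^d be a linear subspace and let φ and ψ be line polynomials in non-parallel directions v_1 and v_2 respectively, and assume span_ℝ(v_1, v_2) ∩ V = {0}. If c' : ℤ^d → ℂ is a V-periodic function with ψc' = 0, then there exists c : ℤ^d → ℂ such that φc = c', ψc = 0, and c is V-periodic. Moreover, if c' takes only integer values and φ is a difference polynomial, then c can be chosen with integer values. -/

import Mathlib

namespace PaperFormal

/-- View an integer vector inside `ℝ^d`. -/
def intVecR {d : ℕ} (u : Fin d → ℤ) : Fin d → ℝ := fun i => (u i : ℝ)

/-- View an integer vector inside `ℚ^d`. -/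
def intVecQ {d : ℕ} (u : Fin d → ℤ) : Fin d → ℚ := fun i => (u i : ℚ)

/-- A (Laurent) polynomial: a finitely supported integer-valued function on `ℤ^d`. -/
def IsPoly {d : ℕ} (f : (Fin d → ℤ) → ℤ) : Prop := (Function.support f).Finite

/-- The product `(fc)(u) = ∑_v f(v) · c(u − v)` of a polynomial `f` with `c : ℤ^d → ℤ`. -/
noncomputable def polyApply {d : ℕ} (f : (Fin d → ℤ) → ℤ) (c : (Fin d → ℤ) → ℤ) :
    (Fin d → ℤ) → ℤ := fun u => ∑ᶠ v, f v * c (u - v)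

/-- The product `(fc)(u) = ∑_v f(v) · c(u − v)` of a polynomial `f` with `c : ℤ^d → ℂ`. -/
noncomputable def polyApplyC {d : ℕ} (f : (Fin d → ℤ) → ℤ) (c : (Fin d → ℤ) → ℂ) :
    (Fin d → ℤ) → ℂ := fun u => ∑ᶠ v, (f v : ℂ) * c (u - v)

/-- `c` is `v`-periodic: `c(u + v) = c(u)` for all `u`. -/
def Periodic {d : ℕ} (c : (Fin d → ℤ) → ℤ) (v : Fin d → ℤ) : Prop := ∀ u, c (u + v) = c u

/-- `c : ℤ^d → ℂ` is `v`-periodic. -/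
def PeriodicC {d : ℕ} (c : (Fin d → ℤ) → ℂ) (v : Fin d → ℤ) : Prop := ∀ u, c (u + v) = c u

/-- `c` is `k`-periodic: it has `k` periods that are linearly independent over `ℚ`. -/
def KPeriodic {d : ℕ} (k : ℕ) (c : (Fin d → ℤ) → ℤ) : Prop :=
  ∃ v : Fin k → (Fin d → ℤ),
    (LinearIndependent ℚ fun i => intVecQ (v i)) ∧ ∀ i, Periodic c (v i)

/-- `c` is strongly periodic: it is `d`-periodic. -/
def StronglyPeriodic {d : ℕ} (c : (Fin d → ℤ) → ℤ) : Prop := KPeriodic d c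

/-- `c : ℤ^d → ℂ` is strongly periodic. -/
def StronglyPeriodicC {d : ℕ} (c : (Fin d → ℤ) → ℂ) : Prop :=
  ∃ v : Fin d → (Fin d → ℤ),
    (LinearIndependent ℚ fun i => intVecQ (v i)) ∧ ∀ i, PeriodicC c (v i)

/-- Two nonzero integer vectors are non-parallel if they are linearly independent over `ℚ`. -/
def NonParallel {d : ℕ} (v w : Fin d → ℤ) : Prop :=
  LinearIndependent ℚ ![intVecQ v, intVecQ w]

/-- A line polynomial in direction `v`: a polynomial whose support contains at least two points
and is contained in `u + ℚv` for some `u ∈ ℤ^d`. -/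
def IsLinePoly {d : ℕ} (f : (Fin d → ℤ) → ℤ) (v : Fin d → ℤ) : Prop :=
  IsPoly f ∧ v ≠ 0 ∧ 2 ≤ (Function.support f).ncard ∧
    ∃ u : Fin d → ℤ, ∀ w ∈ Function.support f, ∃ q : ℚ, intVecQ w = intVecQ u + q • intVecQ v

/-- The difference polynomial `X^v − 1`: value `1` at `v`, value `−1` at `0`, and `0` elsewhere. -/
def diffPoly {d : ℕ} (v : Fin d → ℤ) : (Fin d → ℤ) → ℤ :=
  fun u => if u = v then 1 else if u = 0 then -1 else 0

/-- `c : ℤ^d → ℂ` is periodic in direction `v`: it is `kv`-periodic for some nonzero integer `k`. -/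
def PeriodicInDirC {d : ℕ} (c : (Fin d → ℤ) → ℂ) (v : Fin d → ℤ) : Prop :=
  ∃ k : ℤ, k ≠ 0 ∧ PeriodicC c (k • v)

/-- `c : ℤ^d → ℂ` is `V`-periodic for a linear subspace `V ⊆ ℝ^d`: it is periodic in
direction `v` for every nonzero integer vector `v` lying in `V`. -/
def VPeriodicC {d : ℕ} (V : Submodule ℝ (Fin d → ℝ)) (c : (Fin d → ℤ) → ℂ) : Prop :=
  ∀ v : Fin d → ℤ, v ≠ 0 → intVecR v ∈ V → PeriodicInDirC c v

/-- The discrete cube `C_m + t`. -/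
def cube {d : ℕ} (m : ℕ) (t : Fin d → ℤ) : Set (Fin d → ℤ) :=
  {u | ∀ i, |u i - t i| ≤ (m : ℤ)}

/-- `c : ℤ^d → ℤ` is sparse: for some positive integer `a`,
`|supp(c) ∩ (C_m + t)| ≤ a·m` for all positive `m` and all `t`. -/
def Sparse {d : ℕ} (c : (Fin d → ℤ) → ℤ) : Prop :=
  ∃ a : ℕ, 0 < a ∧ ∀ m : ℕ, 0 < m → ∀ t : Fin d → ℤ,
    (Function.support c ∩ cube m t).ncard ≤ a * m

/-- A `v`-fiber: a function whose support is contained in `w + ℚv` for some `w ∈ ℤ^d`. -/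
def IsFiber {d : ℕ} (e : (Fin d → ℤ) → ℤ) (v : Fin d → ℤ) : Prop :=
  ∃ w : Fin d → ℤ, ∀ x ∈ Function.support e, ∃ q : ℚ, intVecQ x = intVecQ w + q • intVecQ v

/-- `c` is a sum of finitely many periodic `v`-fibers. -/
def FinSumPeriodicFibers {d : ℕ} (v : Fin d → ℤ) (c : (Fin d → ℤ) → ℤ) : Prop :=
  ∃ (r : ℕ) (e : Fin r → ((Fin d → ℤ) → ℤ)), c = ∑ j, e j ∧
    ∀ j, IsFiber (e j) v ∧ ∃ w : Fin d → ℤ, w ≠ 0 ∧ Periodic (e j) w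

end PaperFormal

/-!
Since the integer points of a real subspace `W` form a saturated subgroup of `ℤ^d`, there is an
additive functional `ℓ : ℤ^d → ℤ` that vanishes on the integer points of
`W = V + span(v₂)` but not at `v₁`. The exponents of `φ` lie on a line in direction `v₁`, so `ℓ`
separates them, and the equation `φc = c'` has a unique solution among functions supported in a
half-space bounded by a level set of `ℓ`, both for functions vanishing where `ℓ` is very negative
and for those vanishing where `ℓ` is very positive: solve for the extreme term of `φ`, level by
level. For integer-valued functions this still works when the extreme coefficients are `±1`.

Now split `c'` into its restrictions to `ℓ ≥ 0` and `ℓ < 0` and lift each part within its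
half-space. A polynomial supported in a single level set of `ℓ` acts level by level, so if it
annihilates `c'` it annihilates both parts, and by uniqueness their lifts. This applies to `ψ` and,
for every period `kv` of `c'` with `v ∈ V`, to `X^{kv} - 1`.
-/

namespace PaperFormal

open scoped AddMonoidAlgebra

section LaurentAction

variable {G M N : Type*} [AddCommGroup G] [AddCommGroup M] [AddCommGroup N]

/-- The translation action of `G` on functions `G → M`, in which `v` turns `c` into `c (· - v)`;
this is multiplication by the monomial `X^v`. -/
def translationAction : Multiplicative G →* Module.End ℤ (G → M) where
  toFun v := LinearMap.funLeft ℤ M (· - v.toAdd)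
  map_one' := by ext; simp [LinearMap.funLeft_apply]
  map_mul' v w := by
    ext
    simp only [LinearMap.funLeft_apply, Module.End.mul_apply, toAdd_mul, sub_sub]

variable (M) in
/-- The product `fc` of a Laurent polynomial `f` with a function `c : G → M`, as an action of the
commutative ring `ℤ[G]`. The coefficient group `M` is arbitrary so that complex-valued and
integer-valued functions are treated alike. -/
noncomputable def laurentAction : ℤ[G] →ₐ[ℤ] Module.End ℤ (G → M) :=
  AddMonoidAlgebra.lift ℤ _ G translationAction

theorem laurentAction_apply (f : ℤ[G]) (c : G → M) (u : G) :
    laurentAction M f c u = ∑ v ∈ f.coeff.support, f.coeff v • c (u - v) := by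
  simp [laurentAction, AddMonoidAlgebra.lift_apply, Finsupp.sum, translationAction,
    LinearMap.funLeft_apply]

theorem laurentAction_comm (f g : ℤ[G]) (c : G → M) :
    laurentAction M f (laurentAction M g c) = laurentAction M g (laurentAction M f c) := by
  rw [← Module.End.mul_apply, ← map_mul, mul_comm, map_mul, Module.End.mul_apply]

theorem laurentAction_comp (i : M →+ N) (f : ℤ[G]) (c : G → M) :
    laurentAction N f (i ∘ c) = i ∘ laurentAction M f c := by
  ext u
  simp [laurentAction_apply]

theorem laurentAction_apply_add [DecidableEq G] {f : ℤ[G]} {w : G} (hw : w ∈ f.coeff.support)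
    (c : G → M) (u : G) :
    laurentAction M f c (u + w) =
      f.coeff w • c u + ∑ v ∈ f.coeff.support.erase w, f.coeff v • c (u + w - v) := by
  rw [laurentAction_apply, ← Finset.add_sum_erase _ _ hw, add_sub_cancel_right]

theorem laurentAction_single_sub_one_eq_zero_iff {v : G} {c : G → M} :
    laurentAction M (AddMonoidAlgebra.single v 1 - 1) c = 0 ↔ Function.Periodic c v := by
  have h (u : G) : laurentAction M (AddMonoidAlgebra.single v 1 - 1) c u = c (u - v) - c u := by
    simp [laurentAction, translationAction, LinearMap.funLeft_apply]
  simp only [funext_iff, h, Pi.zero_apply, sub_eq_zero]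
  exact ⟨fun hc u ↦ by simpa using (hc (u + v)).symm, fun hc u ↦ (hc.sub_eq u)⟩

end LaurentAction

section InheritsAnnihilators

variable {G M : Type*} [AddCommGroup G] [AddCommGroup M]

/-- The support of the Laurent polynomial `g` lies in a single coset of `H`. -/
def SupportedInCoset (H : Submodule ℤ G) (g : ℤ[G]) : Prop :=
  ∃ u, ∀ v ∈ g.coeff.support, v - u ∈ H

/-- Every Laurent polynomial supported in a coset of `H` that annihilates `c'` also annihilates `c`.
Since `X^v - 1` is such a polynomial for `v ∈ H`, this covers both equations `ψc = 0` and periods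
in `H`. -/
def InheritsAnnihilators (H : Submodule ℤ G) (c' c : G → M) : Prop :=
  ∀ g : ℤ[G], SupportedInCoset H g → laurentAction M g c' = 0 → laurentAction M g c = 0

namespace InheritsAnnihilators

variable {H K : Submodule ℤ G} {c' c : G → M}

theorem mono (h : InheritsAnnihilators K c' c) (hHK : H ≤ K) : InheritsAnnihilators H c' c :=
  fun g ⟨u, hu⟩ ↦ h g ⟨u, fun v hv ↦ hHK (hu v hv)⟩

theorem periodic (h : InheritsAnnihilators H c' c) {v : G} (hv : v ∈ H)
    (hc' : Function.Periodic c' v) : Function.Periodic c v := by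
  classical
  rw [← laurentAction_single_sub_one_eq_zero_iff] at hc' ⊢
  refine h _ ⟨0, fun w hw ↦ ?_⟩ hc'
  have hw' : w = v ∨ w = 0 := by
    by_contra! hne
    simp [AddMonoidAlgebra.one_def, hne.1.symm, hne.2.symm] at hw
  rcases hw' with rfl | rfl <;> simp [hv]

theorem comp {N : Type*} [AddCommGroup N] (h : InheritsAnnihilators H c' c) {i : M →+ N}
    (hi : Function.Injective i) : InheritsAnnihilators H (i ∘ c') (i ∘ c) := by
  intro g hg hgc'
  have hgc'₀ : laurentAction M g c' = 0 := by
    rw [laurentAction_comp] at hgc'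
    ext u
    exact hi (by simpa using congrFun hgc' u)
  rw [laurentAction_comp, h g hg hgc'₀]
  ext
  simp

end InheritsAnnihilators

end InheritsAnnihilators

section HalfSpace

variable {G M : Type*} [AddCommGroup G] [AddCommGroup M] {ℓ : Module.Dual ℤ G} {f : ℤ[G]} {w : G}

/-- `w` is the unique exponent of `f` at which `ℓ` is smallest. -/
def IsInitialExponent (ℓ : Module.Dual ℤ G) (f : ℤ[G]) (w : G) : Prop :=
  w ∈ f.coeff.support ∧ ∀ v ∈ f.coeff.support, v ≠ w → ℓ w < ℓ v

theorem exists_isInitialExponent (hf : f.coeff.support.Nonempty)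
    (hℓ : Set.InjOn ℓ f.coeff.support) : ∃ w, IsInitialExponent ℓ f w := by
  obtain ⟨w, hw, hmin⟩ := f.coeff.support.exists_min_image ℓ hf
  exact ⟨w, hw, fun v hv hvw ↦ (hmin v hv).lt_of_ne fun h ↦ hvw (hℓ hw hv h).symm⟩

namespace IsInitialExponent

theorem apply_add_sub_lt [DecidableEq G] (hw : IsInitialExponent ℓ f w) {v : G}
    (hv : v ∈ f.coeff.support.erase w) (u : G) : ℓ (u + w - v) < ℓ u := by
  have := hw.2 v (Finset.mem_of_mem_erase hv) (Finset.ne_of_mem_erase hv)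
  simp only [map_sub, map_add]
  lia

theorem apply_le (hw : IsInitialExponent ℓ f w) {v : G} (hv : v ∈ f.coeff.support) :
    ℓ w ≤ ℓ v := by
  rcases eq_or_ne v w with rfl | hvw
  · exact le_rfl
  · exact (hw.2 v hv hvw).le

theorem eq_zero_of_laurentAction_eq_zero (hw : IsInitialExponent ℓ f w)
    (hinj : Function.Injective fun m : M ↦ f.coeff w • m) {c : G → M} {K : ℤ}
    (hcK : ∀ u, ℓ u < K → c u = 0) (hfc : laurentAction M f c = 0) : c = 0 := by
  classical
  suffices ∀ (n : ℕ) u, ℓ u < K + n → c u = 0 from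
    funext fun u ↦ this (ℓ u - K + 1).toNat u (by lia)
  intro n
  induction n with
  | zero => simpa using hcK
  | succ n ih =>
    intro u hu
    have hlower : ∑ v ∈ f.coeff.support.erase w, f.coeff v • c (u + w - v) = 0 :=
      Finset.sum_eq_zero fun v hv ↦ by
        rw [ih _ (by have := hw.apply_add_sub_lt hv u; push_cast at hu; lia), smul_zero]
    have hlead := laurentAction_apply_add hw.1 c u
    rw [hfc, hlower, add_zero] at hlead
    exact hinj (by simpa using hlead.symm)

open scoped Classical in
/-- The solution `c` of `fc = c'` that vanishes where `ℓ < K`, computed level by level: the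
equation at `u + w` expresses `f(w) • c(u)` through `c'` and values of `c` at lower levels.
Division by `f(w)` is performed by `div`. -/
noncomputable def forwardSolution (hw : IsInitialExponent ℓ f w) (div : M → M) (K : ℤ)
    (c' : G → M) (u : G) : M :=
  if ℓ u < K then 0 else
    div (c' (u + w) - ∑ v ∈ (f.coeff.support.erase w).attach,
      f.coeff v • forwardSolution hw div K c' (u + w - v))
termination_by (ℓ u - K + 1).toNat
decreasing_by
  have := hw.apply_add_sub_lt v.2 u
  lia

theorem laurentAction_forwardSolution (hw : IsInitialExponent ℓ f w) {div : M → M}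
    (hdiv : Function.RightInverse div fun m ↦ f.coeff w • m) {K : ℤ} {c' : G → M}
    (hc' : ∀ u, ℓ u < K + ℓ w → c' u = 0) :
    laurentAction M f (hw.forwardSolution div K c') = c' := by
  classical
  ext x
  obtain ⟨u, rfl⟩ : ∃ u, x = u + w := ⟨x - w, by simp⟩
  rcases lt_or_ge (ℓ u) K with hu | hu
  · rw [hc' _ (by simpa using hu), laurentAction_apply]
    refine Finset.sum_eq_zero fun v hv ↦ ?_
    have hvw := hw.apply_le hv
    rw [forwardSolution, if_pos (by simp only [map_sub, map_add]; lia), smul_zero]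
  · rw [laurentAction_apply_add hw.1, forwardSolution, if_neg hu.not_gt,
      Finset.sum_attach _ fun v ↦ f.coeff v • hw.forwardSolution div K c' (u + w - v)]
    convert sub_add_cancel _ _
    exact hdiv _

theorem exists_laurentAction_eq (hw : IsInitialExponent ℓ f w)
    (hsurj : Function.Surjective fun m : M ↦ f.coeff w • m) {c' : G → M} {K : ℤ}
    (hc' : ∀ u, ℓ u < K + ℓ w → c' u = 0) :
    ∃ c : G → M, laurentAction M f c = c' ∧ ∀ u, ℓ u < K → c u = 0 := by
  obtain ⟨div, hdiv⟩ := hsurj.hasRightInverse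
  exact ⟨hw.forwardSolution div K c', hw.laurentAction_forwardSolution hdiv hc',
    fun u hu ↦ by rw [forwardSolution, if_pos hu]⟩

theorem exists_lift_of_eq_zero (hw : IsInitialExponent ℓ f w)
    (hbij : Function.Bijective fun m : M ↦ f.coeff w • m) {c' : G → M} {K : ℤ}
    (hc' : ∀ u, ℓ u < K → c' u = 0) :
    ∃ c : G → M, laurentAction M f c = c' ∧ InheritsAnnihilators ℓ.ker c' c := by
  obtain ⟨c, hfc, hc⟩ := hw.exists_laurentAction_eq hbij.2 (c' := c') (K := K - ℓ w) (by simpa)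
  refine ⟨c, hfc, fun g ⟨u₀, hg⟩ hgc' ↦ ?_⟩
  have hgc : ∀ u, ℓ u < K - ℓ w + ℓ u₀ → laurentAction M g c u = 0 := by
    intro u hu
    rw [laurentAction_apply]
    refine Finset.sum_eq_zero fun v hv ↦ ?_
    have hv₀ : ℓ v - ℓ u₀ = 0 := by simpa using hg v hv
    rw [hc _ (by rw [map_sub]; lia), smul_zero]
  exact hw.eq_zero_of_laurentAction_eq_zero hbij.1 hgc
    (by rw [laurentAction_comm, hfc, hgc'])

end IsInitialExponent

theorem inheritsAnnihilators_indicator (ℓ : Module.Dual ℤ G) (T : Set ℤ) (c : G → M) :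
    InheritsAnnihilators ℓ.ker c ((ℓ ⁻¹' T).indicator c) := by
  classical
  rintro g ⟨u₀, hg⟩ hgc
  ext u
  have hlevel : ∀ v ∈ g.coeff.support, ℓ (u - v) = ℓ (u - u₀) := by
    intro v hv
    have hv₀ : ℓ v - ℓ u₀ = 0 := by simpa using hg v hv
    simp only [map_sub]
    lia
  have hu := congrFun hgc u
  rw [laurentAction_apply] at hu ⊢
  by_cases hT : ℓ (u - u₀) ∈ T
  · rw [← hu]
    exact Finset.sum_congr rfl fun v hv ↦ by simp_all [Set.indicator]
  · exact Finset.sum_eq_zero fun v hv ↦ by simp_all [Set.indicator]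

theorem IsInitialExponent.exists_lift {w₀ w₁ : G} (hw₀ : IsInitialExponent ℓ f w₀)
    (hw₁ : IsInitialExponent (-ℓ) f w₁)
    (hbij₀ : Function.Bijective fun m : M ↦ f.coeff w₀ • m)
    (hbij₁ : Function.Bijective fun m : M ↦ f.coeff w₁ • m) (c' : G → M) :
    ∃ c : G → M, laurentAction M f c = c' ∧ InheritsAnnihilators ℓ.ker c' c := by
  set pos := (ℓ ⁻¹' Set.Ici 0).indicator c' with hpos
  set neg := (ℓ ⁻¹' Set.Iio 0).indicator c' with hneg
  have hsplit : pos + neg = c' := by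
    rw [hpos, hneg, ← Set.compl_Ici, Set.preimage_compl, Set.indicator_self_add_compl]
  obtain ⟨c₀, hfc₀, hc₀⟩ := hw₀.exists_lift_of_eq_zero hbij₀ (c' := pos) (K := 0) fun u hu ↦
    Set.indicator_of_notMem (by simpa using hu) _
  obtain ⟨c₁, hfc₁, hc₁⟩ := hw₁.exists_lift_of_eq_zero hbij₁ (c' := neg) (K := 0) fun u hu ↦
    Set.indicator_of_notMem (by simpa using (neg_lt_zero.1 hu).le) _
  refine ⟨c₀ + c₁, by rw [map_add, hfc₀, hfc₁, hsplit], fun g hg hgc' ↦ ?_⟩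
  rw [map_add, hc₀ g hg (inheritsAnnihilators_indicator ℓ _ c' g hg hgc'),
    hc₁ g (by simpa [SupportedInCoset] using hg)
      (inheritsAnnihilators_indicator ℓ _ c' g hg hgc'), add_zero]

end HalfSpace

section IntegerVectors

variable {d : ℕ}

/-- The integer vectors lying in the real subspace `W`. -/
def integerPoints (W : Submodule ℝ (Fin d → ℝ)) : Submodule ℤ (Fin d → ℤ) :=
  (W.restrictScalars ℤ).comap ((Algebra.linearMap ℤ ℝ).compLeft (Fin d))

theorem mem_integerPoints {W : Submodule ℝ (Fin d → ℝ)} {v : Fin d → ℤ} :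
    v ∈ integerPoints W ↔ intVecR v ∈ W :=
  Iff.rfl

instance isTorsionFree_quotient_integerPoints (W : Submodule ℝ (Fin d → ℝ)) :
    Module.IsTorsionFree ℤ ((Fin d → ℤ) ⧸ integerPoints W) := by
  refine .of_smul_eq_zero fun n x hnx ↦ ?_
  obtain ⟨v, rfl⟩ := Submodule.Quotient.mk_surjective _ x
  rw [← Submodule.Quotient.mk_smul, Submodule.Quotient.mk_eq_zero, mem_integerPoints] at hnx
  rw [Submodule.Quotient.mk_eq_zero, mem_integerPoints]
  have hsmul : intVecR (n • v) = (n : ℝ) • intVecR v := by ext; simp [intVecR]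
  rw [hsmul] at hnx
  exact or_iff_not_imp_left.2 fun hn ↦ (W.smul_mem_iff (Int.cast_ne_zero.2 hn)).1 hnx

theorem exists_dual_apply_ne_zero_of_notMem {W : Submodule ℝ (Fin d → ℝ)} {v : Fin d → ℤ}
    (hv : intVecR v ∉ W) :
    ∃ ℓ : Module.Dual ℤ (Fin d → ℤ), ℓ v ≠ 0 ∧ integerPoints W ≤ ℓ.ker := by
  obtain ⟨ℓ, hℓv, hℓW⟩ := Submodule.exists_dual_map_eq_bot_of_notMem
    (p := integerPoints W) (mem_integerPoints.not.2 hv) inferInstance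
  exact ⟨ℓ, hℓv, LinearMap.le_ker_iff_map.2 hℓW⟩

theorem NonParallel.linearIndependent_intVecR {v w : Fin d → ℤ} (h : NonParallel v w) :
    LinearIndependent ℝ ![intVecR v, intVecR w] := by
  have hcast : ![intVecR v, intVecR w] =
      fun i ↦ algebraMap ℚ ℝ ∘ ![intVecQ v, intVecQ w] i := by
    ext i j
    fin_cases i <;> simp [intVecR, intVecQ]
  rw [hcast]
  exact linearIndependent_algebraMap_comp_iff.2 h

theorem NonParallel.intVecR_notMem_sup_span {V : Submodule ℝ (Fin d → ℝ)} {v₁ v₂ : Fin d → ℤ}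
    (h : NonParallel v₁ v₂) (hV : Submodule.span ℝ {intVecR v₁, intVecR v₂} ⊓ V = ⊥) :
    intVecR v₁ ∉ V ⊔ Submodule.span ℝ {intVecR v₂} := by
  intro hmem
  obtain ⟨x, hx, y, hy, hxy⟩ := Submodule.mem_sup.1 hmem
  obtain ⟨t, rfl⟩ := Submodule.mem_span_singleton.1 hy
  have hx' : x ∈ Submodule.span ℝ {intVecR v₁, intVecR v₂} :=
    Submodule.mem_span_pair.2 ⟨1, -t, by rw [← hxy]; module⟩
  have hx₀ : x = 0 := by simpa [hV] using Submodule.mem_inf.2 ⟨hx', hx⟩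
  have := LinearIndependent.pair_iff.1 h.linearIndependent_intVecR 1 (-t)
    (by rw [← hxy, hx₀]; module)
  exact one_ne_zero this.1

theorem IsLinePoly.exists_intVecR_sub_mem_span {φ : (Fin d → ℤ) → ℤ} {v : Fin d → ℤ}
    (hφ : IsLinePoly φ v) :
    ∃ u, ∀ w ∈ Function.support φ, intVecR (w - u) ∈ Submodule.span ℝ {intVecR v} := by
  obtain ⟨-, -, -, u, hu⟩ := hφ
  refine ⟨u, fun w hw ↦ ?_⟩
  obtain ⟨q, hq⟩ := hu w hw
  refine Submodule.mem_span_singleton.2 ⟨q, ?_⟩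
  ext i
  have hi : (w i : ℚ) = u i + q * v i := congrFun hq i
  have hi' : (w i : ℝ) = u i + q * v i := by exact_mod_cast hi
  simp [intVecR, hi']

theorem IsLinePoly.injOn_support {φ : (Fin d → ℤ) → ℤ} {v : Fin d → ℤ} (hφ : IsLinePoly φ v)
    {ℓ : Module.Dual ℤ (Fin d → ℤ)} (hℓ : ℓ v ≠ 0) : Set.InjOn ℓ (Function.support φ) := by
  obtain ⟨-, -, -, u, hu⟩ := hφ
  intro x hx y hy hxy
  obtain ⟨q, hq⟩ := hu x hx
  obtain ⟨r, hr⟩ := hu y hy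
  have hdiff : (q - r).den • (x - y) = (q - r).num • v := by
    ext i
    have hxi : (x i : ℚ) = u i + q * v i := congrFun hq i
    have hyi : (y i : ℚ) = u i + r * v i := congrFun hr i
    have hi : ((q - r).den : ℚ) * (x i - y i) = (q - r).num * v i := by
      rw [← Rat.den_mul_eq_num, hxi, hyi]
      ring
    simpa using mod_cast hi
  have hnum : (q - r).num = 0 := by
    have hℓdiff := congrArg ℓ hdiff
    rw [map_nsmul, map_zsmul, map_sub, hxy, sub_self, smul_zero] at hℓdiff
    exact (smul_eq_zero.1 hℓdiff.symm).resolve_right hℓ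
  rw [hnum, zero_smul] at hdiff
  exact sub_eq_zero.1 ((smul_eq_zero.1 hdiff).resolve_left (q - r).den_nz)

end IntegerVectors

section Lift

variable {d : ℕ}

/-- A polynomial in the sense of `IsPoly`, regarded as an element of the group ring `ℤ[ℤ^d]`. -/
noncomputable def IsPoly.toLaurent {f : (Fin d → ℤ) → ℤ} (hf : IsPoly f) : ℤ[Fin d → ℤ] :=
  .ofCoeff (Finsupp.ofSupportFinite f hf)

theorem IsPoly.coe_coeff_toLaurent {f : (Fin d → ℤ) → ℤ} (hf : IsPoly f) :
    ⇑hf.toLaurent.coeff = f :=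
  rfl

theorem IsPoly.coe_support_toLaurent {f : (Fin d → ℤ) → ℤ} (hf : IsPoly f) :
    (hf.toLaurent.coeff.support : Set (Fin d → ℤ)) = Function.support f :=
  (Finsupp.fun_support_eq hf.toLaurent.coeff).symm

theorem IsPoly.polyApplyC_eq_laurentAction {f : (Fin d → ℤ) → ℤ} (hf : IsPoly f)
    (c : (Fin d → ℤ) → ℂ) : polyApplyC f c = laurentAction ℂ hf.toLaurent c := by
  ext u
  simp only [laurentAction_apply, hf.coe_coeff_toLaurent, zsmul_eq_mul]
  refine finsum_eq_sum_of_support_subset _ ?_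
  rw [hf.coe_support_toLaurent]
  exact fun v hv hfv ↦ hv (by simp [hfv])

theorem IsLinePoly.exists_lift {M : Type*} [AddCommGroup M] {φ : (Fin d → ℤ) → ℤ}
    {v : Fin d → ℤ} (hφ : IsLinePoly φ v) {W : Submodule ℝ (Fin d → ℝ)} (hv : intVecR v ∉ W)
    (hbij : ∀ w ∈ Function.support φ, Function.Bijective fun m : M ↦ φ w • m)
    (c' : (Fin d → ℤ) → M) :
    ∃ c, laurentAction M hφ.1.toLaurent c = c' ∧
      InheritsAnnihilators (integerPoints W) c' c := by
  obtain ⟨ℓ, hℓv, hℓW⟩ := exists_dual_apply_ne_zero_of_notMem hv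
  have hsupp := hφ.1.coe_support_toLaurent
  have hne : hφ.1.toLaurent.coeff.support.Nonempty := by
    rw [← Finset.coe_nonempty, hsupp]
    exact Set.nonempty_of_ncard_ne_zero (by have := hφ.2.2.1; lia)
  obtain ⟨w₀, hw₀⟩ := exists_isInitialExponent (ℓ := ℓ) hne (by
    rw [hsupp]; exact hφ.injOn_support hℓv)
  obtain ⟨w₁, hw₁⟩ := exists_isInitialExponent (ℓ := -ℓ) hne (by
    rw [hsupp]; exact hφ.injOn_support (by simpa using hℓv))
  obtain ⟨c, hφc, hc⟩ := hw₀.exists_lift hw₁ (hbij w₀ (Finsupp.mem_support_iff.1 hw₀.1))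
    (hbij w₁ (Finsupp.mem_support_iff.1 hw₁.1)) c'
  exact ⟨c, hφc, hc.mono hℓW⟩

namespace InheritsAnnihilators

variable {V W : Submodule ℝ (Fin d → ℝ)} {c' c : (Fin d → ℤ) → ℂ}

theorem polyApplyC_eq_zero (h : InheritsAnnihilators (integerPoints W) c' c)
    {ψ : (Fin d → ℤ) → ℤ} (hψ : IsPoly ψ)
    (hψW : ∃ u, ∀ w ∈ Function.support ψ, intVecR (w - u) ∈ W) (hψc' : polyApplyC ψ c' = 0) :
    polyApplyC ψ c = 0 := by
  rw [hψ.polyApplyC_eq_laurentAction] at hψc' ⊢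
  rw [← hψ.coe_support_toLaurent] at hψW
  exact h _ hψW hψc'

theorem vPeriodicC (h : InheritsAnnihilators (integerPoints W) c' c) (hVW : V ≤ W)
    (hc' : VPeriodicC V c') : VPeriodicC V c := by
  intro v hv hvV
  obtain ⟨k, hk, hper⟩ := hc' v hv hvV
  exact ⟨k, hk, h.periodic (Submodule.smul_mem _ k (mem_integerPoints.2 (hVW hvV))) hper⟩

end InheritsAnnihilators

theorem lift_through_line_polynomial_general {V W : Submodule ℝ (Fin d → ℝ)} (hVW : V ≤ W)
    {φ ψ : (Fin d → ℤ) → ℤ} {v : Fin d → ℤ} (hφ : IsLinePoly φ v) (hv : intVecR v ∉ W)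
    (hψ : IsPoly ψ) (hψW : ∃ u, ∀ w ∈ Function.support ψ, intVecR (w - u) ∈ W)
    {c' : (Fin d → ℤ) → ℂ} (hc'V : VPeriodicC V c') (hc'ann : polyApplyC ψ c' = 0) :
    (∃ c : (Fin d → ℤ) → ℂ,
      polyApplyC φ c = c' ∧ polyApplyC ψ c = 0 ∧ VPeriodicC V c) ∧
    ((∀ u, ∃ z : ℤ, c' u = (z : ℂ)) → (∀ w ∈ Function.support φ, IsUnit (φ w)) →
      ∃ c : (Fin d → ℤ) → ℂ, (∀ u, ∃ z : ℤ, c u = (z : ℂ)) ∧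
        polyApplyC φ c = c' ∧ polyApplyC ψ c = 0 ∧ VPeriodicC V c) := by
  refine ⟨?_, fun hint hunit ↦ ?_⟩
  · have hbij : ∀ w ∈ Function.support φ, Function.Bijective fun z : ℂ ↦ φ w • z :=
      fun w hw ↦ by simpa using mulLeft_bijective₀ (φ w : ℂ) (Int.cast_ne_zero.2 hw)
    obtain ⟨c, hφc, hc⟩ := hφ.exists_lift hv hbij c'
    exact ⟨c, by rw [hφ.1.polyApplyC_eq_laurentAction, hφc],
      hc.polyApplyC_eq_zero hψ hψW hc'ann, hc.vPeriodicC hVW hc'V⟩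
  · choose z hz using hint
    have hz' : Int.castAddHom ℂ ∘ z = c' := funext fun u ↦ (hz u).symm
    obtain ⟨a, hφa, ha⟩ := hφ.exists_lift hv
      (fun w hw ↦ (hunit w hw).smul_bijective) z
    have hc := hz' ▸ ha.comp (i := Int.castAddHom ℂ) Int.cast_injective
    exact ⟨Int.castAddHom ℂ ∘ a, fun u ↦ ⟨a u, rfl⟩,
      by rw [hφ.1.polyApplyC_eq_laurentAction, laurentAction_comp, hφa, hz'],
      hc.polyApplyC_eq_zero hψ hψW hc'ann, hc.vPeriodicC hVW hc'V⟩

theorem isUnit_diffPoly {w x : Fin d → ℤ} (hx : diffPoly w x ≠ 0) : IsUnit (diffPoly w x) := by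
  unfold diffPoly at hx ⊢
  split_ifs at hx ⊢ <;> simp_all

end Lift

/-- Lifting lemma: if `φ, ψ` are line polynomials in non-parallel directions
`v₁, v₂` with `span_ℝ(v₁, v₂) ∩ V = {0}` and `c'` is `V`-periodic with `ψc' = 0`, then there is
`c` with `φc = c'`, `ψc = 0`, `c` `V`-periodic; moreover `c` can be chosen integer-valued if
`c'` is integer-valued and `φ` is a difference polynomial. -/
theorem lift_through_line_polynomial
    {d : ℕ} (V : Submodule ℝ (Fin d → ℝ))
    (φ ψ : (Fin d → ℤ) → ℤ) (v₁ v₂ : Fin d → ℤ)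
    (hφ : IsLinePoly φ v₁) (hψ : IsLinePoly ψ v₂)
    (hnp : NonParallel v₁ v₂)
    (hspan : Submodule.span ℝ {intVecR v₁, intVecR v₂} ⊓ V = ⊥)
    (c' : (Fin d → ℤ) → ℂ) (hc'V : VPeriodicC V c') (hc'ann : polyApplyC ψ c' = 0) :
    (∃ c : (Fin d → ℤ) → ℂ,
      polyApplyC φ c = c' ∧ polyApplyC ψ c = 0 ∧ VPeriodicC V c) ∧
    ((∀ u, ∃ z : ℤ, c' u = (z : ℂ)) → (∃ w : Fin d → ℤ, w ≠ 0 ∧ φ = diffPoly w) →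
      ∃ c : (Fin d → ℤ) → ℂ, (∀ u, ∃ z : ℤ, c u = (z : ℂ)) ∧
        polyApplyC φ c = c' ∧ polyApplyC ψ c = 0 ∧ VPeriodicC V c) := by
  obtain ⟨u, hu⟩ := hψ.exists_intVecR_sub_mem_span
  have h := lift_through_line_polynomial_general le_sup_left hφ
    (hnp.intVecR_notMem_sup_span hspan) hψ.1 ⟨u, fun w hw ↦ le_sup_right (a := V) (hu w hw)⟩
    hc'V hc'ann
  exact ⟨h.1, fun hint ⟨w, _, hw⟩ ↦ h.2 hint (by subst hw; exact fun _ ↦ isUnit_diffPoly)⟩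

end PaperFormal
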